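/- For all integers n ≥ 2 and 0 ≤ k ≤ n, one has A_D(n,k) = [Σ_{r=0}^{k} (−1)^{k−r} · 2^r · r! · S_D(n,r) · C(n−r, k−r)] − n · 2^{n−1} · A(n−1, k−1), where C(a,b) denotes the binomial coefficient and A(n−1, k−1) := 0 when k = 0. -/

import Mathlib

open Classical Finset

/-! ### Signed permutations (type B), window notation -/

/-- `w` is the window notation of a signed permutation of `{1,…,n}`. -/
def IsSignedPerm {n : ℕ} (w : Fin n → ℤ) : Prop :=
  (∀ i, 1 ≤ |w i| ∧ |w i| ≤ (n : ℤ)) ∧ Function.Injective fun i => |w i|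

/-- The value `β(i)` for `1 ≤ i ≤ n`, and `0` otherwise (so `β(0) = 0`). -/
def bVal {n : ℕ} (w : Fin n → ℤ) (i : ℕ) : ℤ :=
  if h : 1 ≤ i ∧ i ≤ n then w ⟨i - 1, by omega⟩ else 0

/-- Type `B` descent number: `#{i ∈ {0,…,n−1} : β(i) > β(i+1)}`, with `β(0) = 0`. -/
noncomputable def desB {n : ℕ} (w : Fin n → ℤ) : ℕ :=
  ((Finset.range n).filter fun i => bVal w (i + 1) < bVal w i).card

/-- Type `B` Eulerian number `A_B(n,k)`. -/
noncomputable def EulB (n k : ℕ) : ℕ :=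
  Nat.card { w : Fin n → ℤ // IsSignedPerm w ∧ desB w = k }

/-- Type `D` descent number: as in type `B` but with the convention `γ(0) = −γ(2)`. -/
noncomputable def desD {n : ℕ} (w : Fin n → ℤ) : ℕ :=
  ((Finset.range n).filter fun i =>
    bVal w (i + 1) < (if i = 0 then -(bVal w 2) else bVal w i)).card

/-- `w` has an even number of negative entries. -/
def IsEvenSigned {n : ℕ} (w : Fin n → ℤ) : Prop :=
  Even ((Finset.univ.filter fun i => w i < 0)).card

/-- Type `D` Eulerian number `A_D(n,k)`. -/
noncomputable def EulD (n k : ℕ) : ℕ :=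
  Nat.card { w : Fin n → ℤ // IsSignedPerm w ∧ IsEvenSigned w ∧ desD w = k }

/-! ### Set partitions of types B and D -/

/-- The negative `−C` of a block `C`. -/
def negSet (C : Finset ℤ) : Finset ℤ := C.image fun x => -x

/-- A `Bₙ`-partition: a set partition of `{−n,…,−1,1,…,n}` such that at most one block
satisfies `C = −C` (the zero-block), and `−C` is a block whenever `C` is. -/
structure BPartition (n : ℕ) where
  blocks : Finset (Finset ℤ)
  cover : ∀ x : ℤ, (x ≠ 0 ∧ |x| ≤ (n : ℤ)) ↔ ∃ C ∈ blocks, x ∈ C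
  nonempty : ∀ C ∈ blocks, C.Nonempty
  disj : ∀ C ∈ blocks, ∀ C' ∈ blocks, C ≠ C' → Disjoint C C'
  closed : ∀ C ∈ blocks, negSet C ∈ blocks
  zeroUnique : ∀ C ∈ blocks, ∀ C' ∈ blocks, negSet C = C → negSet C' = C' → C = C'

/-- A `Dₙ`-partition: a `Bₙ`-partition whose zero-block, if present, has at least
two positive elements. -/
def IsDPartition {n : ℕ} (P : BPartition n) : Prop :=
  ∀ C ∈ P.blocks, negSet C = C → 2 ≤ (C.filter fun x => 0 < x).card

/-- `P` has exactly `r` pairs `{C, −C}` of nonzero blocks. -/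
def hasPairs {n : ℕ} (P : BPartition n) (r : ℕ) : Prop :=
  (P.blocks.filter fun C => negSet C ≠ C).card = 2 * r

/-- Stirling number of the second kind of type `B`. -/
noncomputable def SB (n r : ℕ) : ℕ :=
  Nat.card { P : BPartition n // hasPairs P r }

/-- Stirling number of the second kind of type `D`. -/
noncomputable def SD (n r : ℕ) : ℕ :=
  Nat.card { P : BPartition n // IsDPartition P ∧ hasPairs P r }

/-- An ordered `Bₙ`-partition: a `Bₙ`-partition with a linear order on its blocks in
which the zero-block (if present) comes first and `C, −C` are always adjacent. -/
structure OrderedBPartition (n : ℕ) where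
  P : BPartition n
  order : List (Finset ℤ)
  nodup : order.Nodup
  same : order.toFinset = P.blocks
  zeroFirst : ∀ C ∈ P.blocks, negSet C = C → order[0]? = some C
  adjacent : ∀ C ∈ P.blocks, negSet C ≠ C →
    ∃ i : ℕ, (order[i]? = some C ∧ order[i+1]? = some (negSet C)) ∨
             (order[i]? = some (negSet C) ∧ order[i+1]? = some C)

/-! ### Classical Stirling and Eulerian numbers -/

/-- The classical Stirling number of the second kind `S(n,r)`. -/
noncomputable def Stir (n r : ℕ) : ℕ :=
  Nat.card { P : Finpartition (Finset.univ : Finset (Fin n)) // P.parts.card = r }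

/-- Number of descents of a permutation of `{1,…,n}`. -/
noncomputable def desA {n : ℕ} (σ : Equiv.Perm (Fin n)) : ℕ :=
  ((Finset.range (n - 1)).filter fun i =>
    ∃ h : i + 1 < n, σ ⟨i + 1, h⟩ < σ ⟨i, Nat.lt_of_succ_lt h⟩).card

/-- The classical Eulerian number `A(n,k)`: permutations with `k−1` descents
(and `A(n,0) = 0`). -/
noncomputable def EulA (n k : ℕ) : ℕ :=
  if k = 0 then 0 else Nat.card { σ : Equiv.Perm (Fin n) // desA σ = k - 1 }

/-! ### Colored permutations -/

/-- `π` is (the window notation of) a colored permutation in `G_{m,n}`. -/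
def IsColoredPerm {m n : ℕ} (π : Fin n → Fin n × ZMod m) : Prop :=
  Function.Bijective fun i => (π i).1

/-- The color order `a ≺ b` on the colored alphabet. -/
def colorLt {m n : ℕ} (a b : Fin n × ZMod m) : Prop :=
  b.2.val < a.2.val ∨ (a.2 = b.2 ∧ a.1 < b.1)

/-- The descent number `des_G` of a colored permutation. -/
noncomputable def desG {m n : ℕ} (π : Fin n → Fin n × ZMod m) : ℕ :=
  ((Finset.range (n - 1)).filter fun i =>
    ∃ h : i + 1 < n, colorLt (π ⟨i + 1, h⟩) (π ⟨i, Nat.lt_of_succ_lt h⟩)).card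
  + (if h : 0 < n then (if (π ⟨0, h⟩).2 ≠ 0 then 1 else 0) else 0)

/-- The Eulerian number `A_m(n,k)` of `G_{m,n}`. -/
noncomputable def EulG (m n k : ℕ) : ℕ :=
  Nat.card { π : Fin n → Fin n × ZMod m // IsColoredPerm π ∧ desG π = k }

/-- The shift `C^{[t]}` of a block of the colored alphabet. -/
def shiftBlock {m n : ℕ} (t : ZMod m) (C : Finset (Fin n × ZMod m)) :
    Finset (Fin n × ZMod m) :=
  C.image fun p => (p.1, p.2 + t)

/-- A `G_{m,n}`-partition. -/
structure GPartition (m n : ℕ) where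
  blocks : Finset (Finset (Fin n × ZMod m))
  cover : ∀ x : Fin n × ZMod m, ∃ C ∈ blocks, x ∈ C
  nonempty : ∀ C ∈ blocks, C.Nonempty
  disj : ∀ C ∈ blocks, ∀ C' ∈ blocks, C ≠ C' → Disjoint C C'
  closed : ∀ C ∈ blocks, shiftBlock 1 C ∈ blocks
  zeroUnique : ∀ C ∈ blocks, ∀ C' ∈ blocks,
    shiftBlock 1 C = C → shiftBlock 1 C' = C' → C = C'

/-- The number of equivalence classes (orbits under shifting) of nonzero blocks. -/
noncomputable def numClasses {m n : ℕ} (P : GPartition m n) : ℕ :=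
  ((P.blocks.filter fun C => shiftBlock 1 C ≠ C).image
    fun C => (Finset.range m).image fun t => shiftBlock (t : ZMod m) C).card

/-- Stirling number of the second kind `S_m(n,r)` for `G_{m,n}`. -/
noncomputable def SG (m n r : ℕ) : ℕ :=
  Nat.card { P : GPartition m n // numClasses P = r }

/-- An ordered `G_{m,n}`-partition. -/
structure OrderedGPartition (m n : ℕ) where
  P : GPartition m n
  order : List (Finset (Fin n × ZMod m))
  nodup : order.Nodup
  same : order.toFinset = P.blocks
  zeroFirst : ∀ C ∈ P.blocks, shiftBlock 1 C = C → order[0]? = some C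
  consec : ∀ C ∈ P.blocks, shiftBlock 1 C ≠ C →
    ∃ i : ℕ, ∃ s : ZMod m, ∀ t : ℕ, t < m →
      order[i + t]? = some (shiftBlock (s + (t : ZMod m)) C)

/-!
Both kinds of numbers arise from counting the `(2m+1)ⁿ` lattice points of the cube `[-m, m]ⁿ`.

On the one hand, sorting the coordinates gives Worpitzky identities: `∑ β, C(m+n-des_B β, n)` over
`Bₙ` is `(2m+1)ⁿ`, and `∑ σ, C(m+n-1-des σ, n)` over `Sₙ` is `mⁿ`. If `β` and `β'` differ exactly in
the sign of their first entry, then one of the numbers `des_B β`, `des_B β'` is the common value of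
`des_D` and the other one is `1 + des (β(2), …, β(n))`. Summing over `Bₙ` and applying Pascal's
rule, one gets `(2m+1)ⁿ - n(2m)ⁿ⁻¹ = ∑ k, (A_D(n,k) + n 2ⁿ⁻¹ A(n-1,k-1)) C(m+n-k, n)`.

On the other hand, a lattice point is an odd map from `{-n, …, -1, 1, …, n}` to `[-m, m]`, whose
level sets form a `Bₙ`-partition. A partition with `r` pairs of nonzero blocks arises from
`2ʳ r! C(m, r)` odd maps, and it is a `Dₙ`-partition unless exactly one coordinate is zero, so
`(2m+1)ⁿ - n(2m)ⁿ⁻¹ = ∑ r, 2ʳ r! S_D(n,r) C(m, r)`.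

Both expansions hold for all `m`, and binomial inversion compares their coefficients.
-/

/-! ### A binomial inversion formula -/

section Inversion

variable {R : Type*} [CommRing R]

lemma sum_neg_one_pow_mul_choose_mul_choose (N m r : ℕ) :
    ∑ j ∈ range (N + 1), (-1 : R) ^ j * N.choose j * (m + N - j).choose (N + r) = m.choose r := by
  have h := congrFun (fwdDiff_iter_choose r N) m
  rw [fwdDiff_iter_eq_sum_shift, ← sum_range_reflect] at h
  have h' : ∑ j ∈ range (N + 1), (-1 : ℤ) ^ j * N.choose j * (m + N - j).choose (N + r)
      = m.choose r := by
    refine (sum_congr rfl fun j hj ↦ ?_).trans h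
    have hj : j ≤ N := mem_range_succ_iff.1 hj
    rw [Nat.add_sub_cancel, Nat.sub_sub_self hj, Nat.choose_symm hj, smul_eq_mul, smul_eq_mul,
      mul_one, Nat.add_sub_assoc hj]
  exact_mod_cast congrArg (Int.cast : ℤ → R) h'

lemma eq_zero_of_sum_mul_choose_eq_zero {n : ℕ} {d : ℕ → R}
    (h : ∀ m, ∑ k ∈ range (n + 1), d k * (m + n - k).choose n = 0) {k : ℕ} (hk : k ≤ n) :
    d k = 0 := by
  induction k using Nat.strong_induction_on with
  | _ k ih =>
    have hsum := h k
    rw [sum_eq_single_of_mem k (mem_range_succ_iff.2 hk)] at hsum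
    · simpa using hsum
    intro j hj hjk
    rcases hjk.lt_or_gt with hlt | hgt
    · rw [ih j hlt (by omega), zero_mul]
    · have hjn := mem_range_succ_iff.1 hj
      rw [Nat.choose_eq_zero_of_lt (by omega), Nat.cast_zero, mul_zero]

lemma choose_eq_sum_Ico (m : ℕ) {n r : ℕ} (hr : r ≤ n) :
    (m.choose r : R) = ∑ k ∈ Ico r (n + 1),
      (-1 : R) ^ (k - r) * (n - r).choose (k - r) * (m + n - k).choose n := by
  rw [sum_Ico_eq_sum_range, Nat.sub_add_comm hr,
    ← sum_neg_one_pow_mul_choose_mul_choose (n - r)]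
  refine sum_congr rfl fun j _ ↦ ?_
  rw [Nat.add_sub_cancel_left, Nat.sub_add_cancel hr, ← Nat.sub_sub, Nat.add_sub_assoc hr]

theorem eq_sum_of_forall_sum_mul_choose_eq {n : ℕ} {a b : ℕ → R}
    (h : ∀ m, ∑ k ∈ range (n + 1), a k * (m + n - k).choose n
      = ∑ r ∈ range (n + 1), b r * m.choose r) {k : ℕ} (hk : k ≤ n) :
    a k = ∑ r ∈ range (k + 1), (-1) ^ (k - r) * b r * (n - r).choose (k - r) := by
  set c : ℕ → R := fun k ↦ ∑ r ∈ range (k + 1), (-1) ^ (k - r) * b r * (n - r).choose (k - r)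
  have hc (m : ℕ) : ∑ k ∈ range (n + 1), c k * (m + n - k).choose n
      = ∑ r ∈ range (n + 1), b r * m.choose r :=
    calc ∑ k ∈ range (n + 1), c k * (m + n - k).choose n
      _ = ∑ r ∈ range (n + 1), ∑ k ∈ Ico r (n + 1),
            (-1) ^ (k - r) * b r * (n - r).choose (k - r) * (m + n - k).choose n := by
          simp only [c, sum_mul]
          exact sum_comm' fun k r ↦ by simp only [mem_range, mem_Ico]; omega
      _ = ∑ r ∈ range (n + 1), b r * m.choose r := by
          refine sum_congr rfl fun r hr ↦ ?_
          rw [choose_eq_sum_Ico m (mem_range_succ_iff.1 hr), mul_sum]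
          exact sum_congr rfl fun k _ ↦ by ring
  refine sub_eq_zero.1 (eq_zero_of_sum_mul_choose_eq_zero (d := fun k ↦ a k - c k) (n := n) ?_ hk)
  intro m
  simp only [sub_mul, sum_sub_distrib, h, hc, sub_self]

end Inversion

/-! ### Descents of words and Worpitzky's identity -/

section Descents

variable {α β : Type*} [LinearOrder α] [LinearOrder β] {n : ℕ}

/-- The number of descents of the word `w₀ w₁ ⋯ wₙ`. The descent statistics of types `A`, `B` and
`D` are all descent numbers of suitable words. -/
def descents (w : Fin (n + 1) → α) : ℕ := #{i : Fin n | w i.succ < w i.castSucc}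

lemma descents_le (w : Fin (n + 1) → α) : descents w ≤ n :=
  (card_filter_le _ _).trans_eq (card_fin n)

lemma descents_cons (a : α) (w : Fin (n + 1) → α) :
    descents (Fin.cons a w : Fin (n + 2) → α) = (if w 0 < a then 1 else 0) + descents w := by
  simp only [descents, Fin.card_filter_univ_succ', Fin.cons_succ, Fin.castSucc_zero, Fin.cons_zero,
    Fin.castSucc_succ]

lemma descents_comp_of_strictMono {f : α → β} (hf : StrictMono f) (w : Fin (n + 1) → α) :
    descents (f ∘ w) = descents w := by
  simp only [descents, Function.comp_apply, hf.lt_iff_lt]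

/-- `ascentsBefore w i` is the number of ascents among the first `i` adjacent pairs of `w`. It is
integer-valued because it serves to shift sequences of integers. -/
def ascentsBefore (w : Fin (n + 1) → α) : Fin (n + 1) → ℤ :=
  Fin.partialSum fun i : Fin n ↦ if w i.castSucc < w i.succ then 1 else 0

lemma ascentsBefore_last {w : Fin (n + 1) → α} (hw : Function.Injective w) :
    ascentsBefore w (Fin.last n) = n - descents w := by
  have hsum : ascentsBefore w (Fin.last n) = #{i : Fin n | ¬ w i.succ < w i.castSucc} := by
    have hlt (i : Fin n) : w i.castSucc < w i.succ ↔ ¬ w i.succ < w i.castSucc := by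
      have := hw.ne i.castSucc_lt_succ.ne
      grind
    simp only [ascentsBefore, Fin.partialSum, Fin.val_last, List.take_of_length_le,
      List.length_ofFn, le_refl, List.sum_ofFn, sum_boole, hlt]
  have hcard := card_filter_add_card_filter_not (s := univ) fun i : Fin n ↦ w i.succ < w i.castSucc
  rw [card_fin] at hcard
  rw [hsum, descents]
  omega

lemma strictMono_toLex_iff (g : Fin (n + 1) → ℤ) (w : Fin (n + 1) → α) :
    StrictMono (fun i ↦ toLex (g i, w i)) ↔ StrictMono (g + ascentsBefore w) := by
  simp only [Fin.strictMono_iff_lt_succ, Prod.Lex.toLex_lt_toLex', Pi.add_apply, ascentsBefore,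
    Fin.partialSum_succ]
  refine forall_congr' fun i ↦ ?_
  split_ifs with h
  · simp only [h, implies_true, and_true]
    omega
  · simp only [h, add_zero, imp_false]
    omega

lemma card_strictMono_le (n M : ℕ) :
    Nat.card {h : Fin n → ℤ // StrictMono (Fin.cons 0 h : Fin (n + 1) → ℤ) ∧
      (Fin.cons 0 h : Fin (n + 1) → ℤ) (Fin.last n) ≤ M} = M.choose n := by
  have e : {h : Fin n → ℤ // StrictMono (Fin.cons 0 h : Fin (n + 1) → ℤ) ∧
      (Fin.cons 0 h : Fin (n + 1) → ℤ) (Fin.last n) ≤ M} ≃ (Fin n ↪o Ioc (0 : ℤ) M) :=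
    { toFun h := OrderEmbedding.ofStrictMono
        (fun i ↦ ⟨h.1 i, mem_Ioc.2 ⟨(Fin.strictMono_cons.1 h.2.1).1 i,
          (h.2.1.monotone (Fin.le_last i.succ)).trans h.2.2⟩⟩)
        fun _ _ hij ↦ (Fin.strictMono_cons.1 h.2.1).2 hij
      invFun e := ⟨fun i ↦ e i,
        Fin.strictMono_cons.2 ⟨fun i ↦ (mem_Ioc.1 (e i).2).1, e.strictMono⟩, by
          cases n with
          | zero => exact Int.natCast_nonneg M
          | succ n => exact (mem_Ioc.1 (e (Fin.last n)).2).2⟩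
      left_inv _ := rfl
      right_inv _ := rfl }
  rw [Nat.card_congr (e.trans Set.powersetCard.ofFinEmbEquiv), Set.powersetCard.card,
    Nat.card_eq_fintype_card, Fintype.card_coe, Int.card_Ioc, sub_zero, Int.toNat_natCast]

lemma card_strictMono_toLex_le {w : Fin (n + 1) → α} (hw : Function.Injective w) (m : ℕ) :
    Nat.card {g : Fin n → ℤ //
      StrictMono (fun i ↦ toLex ((Fin.cons 0 g : Fin (n + 1) → ℤ) i, w i)) ∧
        (Fin.cons 0 g : Fin (n + 1) → ℤ) (Fin.last n) ≤ m} = (m + n - descents w).choose n := by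
  rw [← card_strictMono_le]
  refine Nat.card_congr (Equiv.subtypeEquiv
    (Equiv.addRight fun i ↦ ascentsBefore w i.succ) fun g ↦ ?_)
  have hshift : (Fin.cons 0 (g + fun i ↦ ascentsBefore w i.succ) : Fin (n + 1) → ℤ)
      = Fin.cons 0 g + ascentsBefore w := by
    funext i
    cases i using Fin.cases <;> simp [ascentsBefore]
  have := descents_le w
  rw [strictMono_toLex_iff, Equiv.coe_addRight, hshift, Pi.add_apply, ascentsBefore_last hw,
    Nat.cast_sub (by omega), Nat.cast_add]
  exact and_congr_right fun _ ↦ by omega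

lemma strictMono_comp_iff_eq_sort {κ : Fin n → α} (hκ : Function.Injective κ)
    (σ : Equiv.Perm (Fin n)) : StrictMono (κ ∘ σ) ↔ Tuple.sort κ = σ := by
  rw [eq_comm, Tuple.eq_sort_iff]
  refine ⟨fun h ↦ ⟨h.monotone, fun i j hij heq ↦ absurd heq (h hij).ne⟩, fun h ↦ ?_⟩
  exact h.1.strictMono_of_injective (hκ.comp σ.injective)

lemma forall_le_iff_cons_last_le {f : Fin n → ℤ} {σ : Equiv.Perm (Fin n)}
    (hf : Monotone (f ∘ σ)) (m : ℕ) :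
    (∀ j, f j ≤ m) ↔ (Fin.cons 0 (f ∘ σ) : Fin (n + 1) → ℤ) (Fin.last n) ≤ m := by
  cases n with
  | zero => exact iff_of_true finZeroElim (Int.natCast_nonneg m)
  | succ n =>
    rw [Fin.cons_last, ← σ.forall_congr_right]
    exact ⟨fun h ↦ h _, fun h i ↦ (hf (Fin.le_last i)).trans h⟩

lemma card_sort_toLex_eq {v : Fin n → α} (hv : Function.Injective v) {a : α}
    (ha : a ∉ Set.range v) (m : ℕ) (σ : Equiv.Perm (Fin n)) :
    Nat.card {f : Fin n → ℤ // (∀ j, toLex (0, a) < toLex (f j, v j) ∧ f j ≤ m) ∧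
      Tuple.sort (fun j ↦ toLex (f j, v j)) = σ}
      = (m + n - descents (Fin.cons a (v ∘ σ) : Fin (n + 1) → α)).choose n := by
  have hinj : Function.Injective (Fin.cons a (v ∘ σ) : Fin (n + 1) → α) :=
    Fin.cons_injective_iff.2 ⟨fun ⟨j, hj⟩ ↦ ha ⟨σ j, hj⟩, hv.comp σ.injective⟩
  rw [← card_strictMono_toLex_le hinj]
  refine Nat.card_congr (Equiv.subtypeEquiv (Equiv.arrowCongr σ.symm (Equiv.refl ℤ)) fun f ↦ ?_)
  set key : Fin n → ℤ ×ₗ α := fun j ↦ toLex (f j, v j)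
  have hkey : Function.Injective key := fun i j h ↦ hv (congrArg (fun x ↦ (ofLex x).2) h)
  have hcons : (fun i ↦ toLex ((Fin.cons 0 (f ∘ σ) : Fin (n + 1) → ℤ) i,
      (Fin.cons a (v ∘ σ) : Fin (n + 1) → α) i)) = Fin.cons (toLex (0, a)) (key ∘ σ) := by
    funext i
    cases i using Fin.cases <;> rfl
  have hpos : (∀ j, toLex (0, a) < key j) ↔ ∀ i, toLex (0, a) < (key ∘ σ) i :=
    σ.forall_congr_right.symm
  have hmono (h : StrictMono (key ∘ σ)) : Monotone (f ∘ σ) :=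
    fun _ _ hij ↦ Prod.Lex.monotone_fst _ _ (h.monotone hij)
  change _ ↔ StrictMono (fun i ↦ toLex ((Fin.cons 0 (f ∘ σ) : Fin (n + 1) → ℤ) i, _)) ∧
    (Fin.cons 0 (f ∘ σ) : Fin (n + 1) → ℤ) (Fin.last n) ≤ m
  rw [hcons, Fin.strictMono_cons, forall_and, hpos, ← strictMono_comp_iff_eq_sort hkey, and_assoc,
    and_assoc]
  refine and_congr_right fun _ ↦ and_comm.trans (and_congr_right fun h ↦ ?_)
  exact forall_le_iff_cons_last_le (hmono h) m

/-- Each lattice point of the box counted by the right-hand side is sorted, ties being broken by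
`v`, by a unique permutation `σ`. -/
theorem sum_choose_descents_cons {v : Fin n → α} (hv : Function.Injective v) {a : α}
    (ha : a ∉ Set.range v) (m : ℕ) :
    ∑ σ : Equiv.Perm (Fin n),
      (m + n - descents (Fin.cons a (v ∘ σ) : Fin (n + 1) → α)).choose n
      = ∏ j, if v j < a then m else m + 1 := by
  set box : Finset (Fin n → ℤ) :=
    Fintype.piFinset fun j ↦ if v j < a then Icc 1 (m : ℤ) else Icc 0 m
  have hbox (f) : f ∈ box ↔ ∀ j, toLex (0, a) < toLex (f j, v j) ∧ f j ≤ m := by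
    refine Fintype.mem_piFinset.trans (forall_congr' fun j ↦ ?_)
    have hne : a ≠ v j := fun h ↦ ha ⟨j, h.symm⟩
    rw [Prod.Lex.toLex_lt_toLex']
    split_ifs with h
    · simp only [mem_Icc, h.not_gt, imp_false]
      omega
    · simp only [mem_Icc, hne.lt_of_le (not_lt.1 h), implies_true, and_true]
  have hfiber (σ : Equiv.Perm (Fin n)) : #{f ∈ box | Tuple.sort (fun j ↦ toLex (f j, v j)) = σ}
      = (m + n - descents (Fin.cons a (v ∘ σ) : Fin (n + 1) → α)).choose n := by
    rw [← card_sort_toLex_eq hv ha]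
    exact (Nat.subtype_card _ fun f ↦ by rw [mem_filter, hbox]).symm
  rw [← sum_congr rfl fun σ _ ↦ hfiber σ, ← card_eq_sum_card_fiberwise fun _ _ ↦ mem_univ _,
    Fintype.card_piFinset]
  exact prod_congr rfl fun j _ ↦ by split_ifs <;> simp

end Descents

section Permutations

variable {n : ℕ} {M : Type*} [AddCommMonoid M]

lemma sum_descents_comp {α : Type*} [LinearOrder α] {u : Fin (n + 1) → α}
    (hu : Function.Injective u) (F : ℕ → M) :
    ∑ τ : Equiv.Perm (Fin (n + 1)), F (descents (u ∘ τ))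
      = ∑ τ : Equiv.Perm (Fin (n + 1)), F (descents τ) := by
  have hsort : StrictMono (u ∘ Tuple.sort u) := (strictMono_comp_iff_eq_sort hu _).2 rfl
  rw [← Equiv.sum_comp (Equiv.mulLeft (Tuple.sort u))]
  exact sum_congr rfl fun τ _ ↦ congrArg F (descents_comp_of_strictMono hsort τ)

theorem sum_choose_descents_perm (n m : ℕ) :
    ∑ τ : Equiv.Perm (Fin (n + 1)), (m + n - descents τ).choose (n + 1) = m ^ (n + 1) := by
  have hval : StrictMono ((↑) : Fin (n + 1) → ℕ) := Fin.val_strictMono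
  have hlt (j : Fin (n + 1)) : (j : ℕ) < n + 1 := j.is_lt
  have h := sum_choose_descents_cons hval.injective (a := n + 1) (fun ⟨j, hj⟩ ↦ (hlt j).ne hj) m
  simp only [hlt, if_true, prod_const, card_fin] at h
  rw [← h]
  refine sum_congr rfl fun τ _ ↦ congrArg (Nat.choose · _) ?_
  rw [descents_cons, Function.comp_apply, if_pos (hlt _), descents_comp_of_strictMono hval]
  omega

lemma sum_perm_descents_tail {α : Type*} [LinearOrder α] {u : Fin (n + 2) → α}
    (hu : Function.Injective u) (F : ℕ → M) :
    ∑ σ : Equiv.Perm (Fin (n + 2)), F (descents (Fin.tail (u ∘ σ)))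
      = (n + 2) • ∑ τ : Equiv.Perm (Fin (n + 1)), F (descents τ) := by
  rw [← Equiv.sum_comp Equiv.Perm.decomposeFin.symm, Fintype.sum_prod_type]
  have htail (p : Fin (n + 2)) : ∑ τ : Equiv.Perm (Fin (n + 1)),
      F (descents (Fin.tail (u ∘ Equiv.Perm.decomposeFin.symm (p, τ))))
      = ∑ τ : Equiv.Perm (Fin (n + 1)), F (descents τ) := by
    have hinj : Function.Injective (u ∘ Equiv.swap 0 p ∘ Fin.succ) :=
      hu.comp ((Equiv.injective _).comp (Fin.succ_injective _))
    rw [← sum_descents_comp hinj]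
    refine sum_congr rfl fun τ _ ↦ congrArg (fun w ↦ F (descents w)) ?_
    funext i
    simp [Fin.tail]
  rw [sum_congr rfl fun p _ ↦ htail p, sum_const, card_fin]

end Permutations

/-! ### Signed injections and signed permutations -/

section SignedInjections

variable {ι : Type*} {m : ℕ}

/-- The absolute values of `y` are pairwise distinct and lie in `{1, …, m}`. A signed permutation
is a signed injection of `Fin n` with bound `n`. -/
def IsSignedInjection (m : ℕ) (y : ι → ℤ) : Prop :=
  (∀ i, 1 ≤ |y i| ∧ |y i| ≤ (m : ℤ)) ∧ Function.Injective fun i ↦ |y i|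

/-- The map with signs `s` and absolute values `e`, where `Fin m` encodes `{1, …, m}`. -/
def signedValue (s : ι → ℤˣ) (e : ι → Fin m) (i : ι) : ℤ := s i * (e i + 1)

lemma abs_signedValue (s : ι → ℤˣ) (e : ι → Fin m) (i : ι) : |signedValue s e i| = e i + 1 := by
  rw [signedValue, abs_mul, Int.abs_eq_natAbs, Int.units_natAbs, abs_of_nonneg (by positivity)]
  simp

lemma signedValue_lt_zero_iff (s : ι → ℤˣ) (e : ι → Fin m) (i : ι) :
    signedValue s e i < 0 ↔ s i = -1 := by
  rcases Int.units_eq_one_or (s i) with h | h <;> simp [signedValue, h] <;> omega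

lemma isSignedInjection_signedValue (s : ι → ℤˣ) (e : ι ↪ Fin m) :
    IsSignedInjection m (signedValue s e) := by
  refine ⟨fun i ↦ ?_, fun i j h ↦ ?_⟩
  · rw [abs_signedValue]
    have := (e i).is_lt
    omega
  · simp only [abs_signedValue] at h
    exact e.injective (Fin.ext (by omega))

lemma exists_signedValue_eq {y : ι → ℤ} (hy : IsSignedInjection m y) :
    ∃ (s : ι → ℤˣ) (e : ι ↪ Fin m), signedValue s e = y := by
  have habs (i) : ∃ a : Fin m, |y i| = a + 1 := by
    have := hy.1 i
    exact ⟨⟨(|y i| - 1).toNat, by omega⟩, by dsimp only; omega⟩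
  have hsign (i) : ∃ s : ℤˣ, s * |y i| = y i := by
    rcases abs_choice (y i) with h | h
    exacts [⟨1, by simp [h]⟩, ⟨-1, by simp [h]⟩]
  choose a ha using habs
  choose s hs using hsign
  refine ⟨s, ⟨a, fun i j hij ↦ hy.2 (by simp only [ha, hij])⟩, funext fun i ↦ ?_⟩
  rw [← hs i, ha]
  rfl

/-- A signed injection amounts to a choice of signs and an injection of the absolute values. -/
noncomputable def signedInjectionEquiv (ι : Type*) (m : ℕ) :
    (ι → ℤˣ) × (ι ↪ Fin m) ≃ {y : ι → ℤ // IsSignedInjection m y} :=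
  Equiv.ofBijective (fun p ↦ ⟨signedValue p.1 p.2, isSignedInjection_signedValue p.1 p.2⟩) <| by
    refine ⟨fun ⟨s, e⟩ ⟨s', e'⟩ h ↦ ?_, fun ⟨y, hy⟩ ↦ ?_⟩
    · have h (i) : signedValue s e i = signedValue s' e' i := congrFun (congrArg Subtype.val h) i
      obtain rfl : e = e' := by
        ext i
        have := congrArg abs (h i)
        rw [abs_signedValue, abs_signedValue] at this
        omega
      refine Prod.ext (funext fun i ↦ Units.ext (mul_right_cancel₀ ?_ (h i))) rfl
      exact (by positivity : (e i : ℤ) + 1 ≠ 0)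
    · obtain ⟨s, e, rfl⟩ := exists_signedValue_eq hy
      exact ⟨(s, e), rfl⟩

lemma card_isSignedInjection [Fintype ι] (m : ℕ) :
    Nat.card {y : ι → ℤ // IsSignedInjection m y}
      = 2 ^ Fintype.card ι * m.descFactorial (Fintype.card ι) := by
  rw [← Nat.card_congr (signedInjectionEquiv ι m), Nat.card_eq_fintype_card, Fintype.card_prod,
    Fintype.card_embedding_eq, Fintype.card_fun, Fintype.card_units_int, Fintype.card_fin]

end SignedInjections

section SignedPermutations

variable {n : ℕ} {M : Type*} [AddCommMonoid M]

/-- The hyperoctahedral group, in window notation. -/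
abbrev SignedPerm (n : ℕ) : Type := {w : Fin n → ℤ // IsSignedPerm w}

noncomputable instance (n : ℕ) : Fintype (SignedPerm n) :=
  Fintype.ofEquiv _ (signedInjectionEquiv (Fin n) n)

lemma sum_signedPerm (F : (Fin n → ℤ) → M) :
    ∑ w : SignedPerm n, F w
      = ∑ s : Fin n → ℤˣ, ∑ σ : Equiv.Perm (Fin n), F (signedValue s id ∘ σ) := by
  have hsigns (σ : Equiv.Perm (Fin n)) : ∑ s : Fin n → ℤˣ, F (signedValue s σ)
      = ∑ s : Fin n → ℤˣ, F (signedValue s id ∘ σ) :=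
    (Equiv.sum_comp (Equiv.arrowCongr σ.symm (Equiv.refl ℤˣ)) fun s ↦ F (signedValue s σ)).symm
  let e : (Fin n → ℤˣ) × (Fin n ↪ Fin n) ≃ SignedPerm n := signedInjectionEquiv (Fin n) n
  rw [sum_comm, ← sum_congr rfl fun σ _ ↦ hsigns σ, sum_comm,
    ← Equiv.sum_comp e, Fintype.sum_prod_type]
  exact sum_congr rfl fun s _ ↦
    Equiv.sum_comp (Equiv.embeddingEquivOfFinite (Fin n)) fun σ ↦ F (signedValue s σ)

lemma signedValue_id_injective (s : Fin n → ℤˣ) : Function.Injective (signedValue s id) := by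
  intro i j h
  have := congrArg abs h
  simp only [abs_signedValue, id_eq] at this
  exact Fin.ext (by omega)

lemma zero_notMem_range_signedValue (s : Fin n → ℤˣ) : (0 : ℤ) ∉ Set.range (signedValue s id) := by
  rintro ⟨i, hi⟩
  have := abs_signedValue s id i
  rw [hi, abs_zero] at this
  omega

theorem sum_signedPerm_choose_descents (n m : ℕ) :
    ∑ w : SignedPerm n, (m + n - descents (Fin.cons 0 w : Fin (n + 1) → ℤ)).choose n
      = (2 * m + 1) ^ n := by
  rw [sum_signedPerm fun w ↦ (m + n - descents (Fin.cons 0 w : Fin (n + 1) → ℤ)).choose n]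
  have hs (s : Fin n → ℤˣ) : ∑ σ : Equiv.Perm (Fin n),
      (m + n - descents (Fin.cons 0 (signedValue s id ∘ σ) : Fin (n + 1) → ℤ)).choose n
      = ∏ j, if s j = -1 then m else m + 1 := by
    rw [sum_choose_descents_cons (signedValue_id_injective s) (zero_notMem_range_signedValue s)]
    simp only [signedValue_lt_zero_iff]
  rw [sum_congr rfl fun s _ ↦ hs s, ← Fintype.piFinset_univ,
    sum_prod_piFinset univ fun _ (t : ℤˣ) ↦ if t = -1 then m else m + 1, prod_const, card_fin]
  congr 1
  rw [UnitsInt.univ, sum_pair (by decide), if_neg (by decide), if_pos rfl]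
  ring

end SignedPermutations

/-! ### The Eulerian numbers of type D -/

section WindowNotation

variable {n : ℕ}

lemma bVal_eq_cons (w : Fin n → ℤ) (i : Fin (n + 1)) :
    bVal w i = (Fin.cons 0 w : Fin (n + 1) → ℤ) i := by
  cases i using Fin.cases with
  | zero => simp [bVal]
  | succ j => simp [bVal, j.is_lt]

lemma desB_eq_descents (w : Fin n → ℤ) : desB w = descents (Fin.cons 0 w : Fin (n + 1) → ℤ) := by
  simp only [desB, descents, card_filter, sum_range, ← bVal_eq_cons, Fin.val_succ, Fin.val_castSucc]

lemma desD_eq_descents (w : Fin (n + 2) → ℤ) :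
    desD w = descents (Fin.cons (-w 1) w : Fin (n + 3) → ℤ) := by
  have hsucc (i : Fin (n + 2)) : bVal w (i + 1) = w i := bVal_eq_cons w i.succ
  have hone : bVal w 2 = w 1 := hsucc 1
  simp only [desD, descents, card_filter, sum_range, hone, hsucc, Fin.cons_succ]
  refine sum_congr rfl fun i _ ↦ ?_
  cases i using Fin.cases with
  | zero => rfl
  | succ j =>
    rw [Fin.val_succ, if_neg (Nat.succ_ne_zero _), ← Fin.val_castSucc, hsucc j.castSucc,
      Fin.castSucc_succ, Fin.cons_succ]

lemma desA_eq_descents (σ : Equiv.Perm (Fin (n + 1))) : desA σ = descents σ := by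
  simp only [desA, descents, card_filter, Nat.add_sub_cancel]
  rw [sum_range]
  refine sum_congr rfl fun i _ ↦ ?_
  have hi : (i : ℕ) + 1 < n + 1 := Nat.succ_lt_succ i.is_lt
  simp only [hi, exists_true_left]
  rfl

lemma desD_le (w : Fin (n + 2) → ℤ) : desD w ≤ n + 2 :=
  (desD_eq_descents w).trans_le (descents_le _)

end WindowNotation

section HeadSign

variable {n : ℕ}

/-- Changing the sign of the first entry; this exchanges `Dₙ` with its complement in `Bₙ`. -/
def negHead (w : Fin (n + 1) → ℤ) : Fin (n + 1) → ℤ := Fin.cons (-w 0) (Fin.tail w)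

lemma negHead_cons (x : ℤ) (u : Fin n → ℤ) :
    negHead (Fin.cons x u : Fin (n + 1) → ℤ) = Fin.cons (-x) u :=
  rfl

lemma abs_negHead (w : Fin (n + 1) → ℤ) (i : Fin (n + 1)) : |negHead w i| = |w i| := by
  cases i using Fin.cases with
  | zero => exact abs_neg _
  | succ j => rfl

lemma negHead_involutive : Function.Involutive (negHead : (Fin (n + 1) → ℤ) → _) := fun w ↦ by
  simp [negHead]

lemma isSignedPerm_negHead_iff {w : Fin (n + 1) → ℤ} :
    IsSignedPerm (negHead w) ↔ IsSignedPerm w := by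
  simp only [IsSignedPerm, abs_negHead]

lemma isEvenSigned_cons (x : ℤ) (u : Fin n → ℤ) :
    IsEvenSigned (Fin.cons x u : Fin (n + 1) → ℤ) ↔ (x < 0 ↔ ¬ IsEvenSigned u) := by
  simp only [IsEvenSigned, card_filter, Fin.sum_univ_succ, Fin.cons_zero, Fin.cons_succ,
    Nat.even_add]
  split_ifs with h <;> simp [h]

lemma isEvenSigned_negHead_iff {w : Fin (n + 1) → ℤ} (hw : w 0 ≠ 0) :
    IsEvenSigned (negHead w) ↔ ¬ IsEvenSigned w := by
  rw [← Fin.cons_self_tail w, negHead_cons, isEvenSigned_cons, isEvenSigned_cons]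
  have : -w 0 < 0 ↔ ¬ w 0 < 0 := by omega
  tauto

/-- `negHead` as a permutation of the set of signed permutations. -/
def negHeadPerm (n : ℕ) : Equiv.Perm (SignedPerm (n + 1)) :=
  Equiv.subtypeEquiv negHead_involutive.toPerm fun _ ↦ isSignedPerm_negHead_iff.symm

lemma SignedPerm.ne_zero (w : SignedPerm n) (i : Fin n) : w.1 i ≠ 0 :=
  abs_pos.1 (w.2.1 i).1

lemma sum_eq_two_mul_sum_isEvenSigned {G : (Fin (n + 1) → ℤ) → ℕ}
    (hG : ∀ w, G (negHead w) = G w) :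
    ∑ w : SignedPerm (n + 1), G w = 2 * ∑ w : SignedPerm (n + 1) with IsEvenSigned w.1, G w := by
  rw [← sum_filter_add_sum_filter_not univ (fun w : SignedPerm (n + 1) ↦ IsEvenSigned w.1), two_mul,
    Nat.add_left_cancel_iff]
  refine sum_equiv (negHeadPerm n) (fun w ↦ ?_) fun w _ ↦ (hG w).symm
  simp only [mem_filter_univ]
  exact (isEvenSigned_negHead_iff (w.ne_zero 0)).symm

lemma desB_cons (x : ℤ) (u : Fin (n + 1) → ℤ) :
    desB (Fin.cons x u : Fin (n + 2) → ℤ)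
      = (if x < 0 then 1 else 0) + ((if u 0 < x then 1 else 0) + descents u) := by
  rw [desB_eq_descents, descents_cons, descents_cons, Fin.cons_zero]

lemma desD_cons (x : ℤ) (u : Fin (n + 1) → ℤ) :
    desD (Fin.cons x u : Fin (n + 2) → ℤ)
      = (if x < -u 0 then 1 else 0) + ((if u 0 < x then 1 else 0) + descents u) := by
  rw [desD_eq_descents, descents_cons, descents_cons, Fin.cons_zero, Fin.cons_one]

lemma desD_negHead (w : Fin (n + 2) → ℤ) : desD (negHead w) = desD w := by
  rw [← Fin.cons_self_tail w, negHead_cons, desD_cons, desD_cons]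
  simp only [neg_lt_neg_iff, lt_neg (a := Fin.tail w 0)]
  omega

lemma desB_or_desB_negHead_eq_desD (w : SignedPerm (n + 2)) :
    desB w.1 = desD w.1 ∧ desB (negHead w.1) = descents (Fin.tail w.1) + 1 ∨
      desB (negHead w.1) = desD w.1 ∧ desB w.1 = descents (Fin.tail w.1) + 1 := by
  have hne : w.1 0 ≠ 0 := w.ne_zero 0
  have habs : |w.1 0| ≠ |Fin.tail w.1 0| := w.2.2.ne Fin.zero_ne_one
  rw [Ne, abs_eq_abs, not_or] at habs
  rw [← Fin.cons_self_tail w.1, negHead_cons, desB_cons, desB_cons, desD_cons, Fin.tail_cons]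
  split_ifs <;> omega

lemma apply_desB_add_apply_desB_negHead {M : Type*} [AddCommMonoid M] (F : ℕ → M)
    (w : SignedPerm (n + 2)) :
    F (desB w.1) + F (desB (negHead w.1)) = F (desD w.1) + F (descents (Fin.tail w.1) + 1) := by
  rcases desB_or_desB_negHead_eq_desD w with ⟨h, h'⟩ | ⟨h, h'⟩ <;> rw [h, h']
  exact add_comm _ _

end HeadSign

section Counting

variable {N : ℕ}

lemma EulD_eq_card (N k : ℕ) :
    EulD N k = #{w ∈ {w : SignedPerm N | IsEvenSigned w.1} | desD w.1 = k} := by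
  rw [EulD, ← Nat.card_congr (Equiv.subtypeSubtypeEquivSubtypeInter _ _)]
  exact Nat.subtype_card _ fun w ↦ by rw [filter_filter, mem_filter_univ]

lemma EulA_succ_eq_card (N k : ℕ) :
    EulA (N + 1) (k + 1) = #{τ : Equiv.Perm (Fin (N + 1)) | descents τ = k} := by
  rw [EulA, if_neg k.succ_ne_zero]
  exact Nat.subtype_card _ fun τ ↦ by rw [mem_filter_univ, desA_eq_descents, Nat.add_sub_cancel]

lemma sum_isEvenSigned_apply_desD (F : ℕ → ℕ) :
    ∑ w : SignedPerm (N + 2) with IsEvenSigned w.1, F (desD w.1)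
      = ∑ k ∈ range (N + 3), EulD (N + 2) k * F k := by
  rw [← sum_fiberwise_of_maps_to' (t := range (N + 3))
    fun w _ ↦ mem_range_succ_iff.2 (desD_le w.1)]
  exact sum_congr rfl fun k _ ↦ by rw [sum_const, smul_eq_mul, EulD_eq_card]

lemma sum_perm_apply_descents (F : ℕ → ℕ) :
    ∑ τ : Equiv.Perm (Fin (N + 1)), F (descents τ)
      = ∑ k ∈ range (N + 1), EulA (N + 1) (k + 1) * F k := by
  rw [← sum_fiberwise_of_maps_to' (t := range (N + 1))
    fun (τ : Equiv.Perm (Fin (N + 1))) _ ↦ mem_range_succ_iff.2 (descents_le τ)]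
  exact sum_congr rfl fun k _ ↦ by rw [sum_const, smul_eq_mul, EulA_succ_eq_card]

lemma sum_perm_apply_descents_add_two (F : ℕ → ℕ) :
    ∑ τ : Equiv.Perm (Fin (N + 1)), F (descents τ + 2)
      = ∑ k ∈ range (N + 3), EulA (N + 1) (k - 1) * F k := by
  have hzero : EulA (N + 1) 0 = 0 := if_pos rfl
  rw [sum_perm_apply_descents fun k ↦ F (k + 2), sum_range_succ' _ (N + 2), Nat.zero_sub,
    sum_range_succ' _ (N + 1), Nat.sub_self, hzero, zero_mul, zero_mul]
  rfl

lemma sum_apply_descents_tail (F : ℕ → ℕ) :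
    ∑ w : SignedPerm (N + 2), F (descents (Fin.tail w.1))
      = 2 ^ (N + 2) * ((N + 2) * ∑ τ : Equiv.Perm (Fin (N + 1)), F (descents τ)) := by
  rw [sum_signedPerm fun w ↦ F (descents (Fin.tail w)),
    sum_congr rfl fun s _ ↦ sum_perm_descents_tail (signedValue_id_injective s) F]
  simp

theorem sum_apply_desB (F : ℕ → ℕ) :
    ∑ w : SignedPerm (N + 2), F (desB w.1)
      = ∑ k ∈ range (N + 3), EulD (N + 2) k * F k
        + (N + 2) * 2 ^ (N + 1) * ∑ τ : Equiv.Perm (Fin (N + 1)), F (descents τ + 1) := by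
  have hflip : ∑ w : SignedPerm (N + 2), F (desB (negHead w.1))
      = ∑ w : SignedPerm (N + 2), F (desB w.1) :=
    Equiv.sum_comp (negHeadPerm (N + 1)) fun w ↦ F (desB w.1)
  have hpair := sum_congr (rfl : univ = univ) fun w (_ : w ∈ univ) ↦
    apply_desB_add_apply_desB_negHead (n := N) F w
  rw [sum_add_distrib, sum_add_distrib, hflip, sum_apply_descents_tail fun k ↦ F (k + 1),
    sum_eq_two_mul_sum_isEvenSigned (G := fun w ↦ F (desD w)) fun w ↦ by rw [desD_negHead],
    sum_isEvenSigned_apply_desD, pow_succ] at hpair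
  linarith

theorem sum_EulD_add_EulA_mul_choose (N m : ℕ) :
    ∑ k ∈ range (N + 3), (EulD (N + 2) k + (N + 2) * 2 ^ (N + 1) * EulA (N + 1) (k - 1))
        * (m + (N + 2) - k).choose (N + 2)
      + (N + 2) * (2 * m) ^ (N + 1) = (2 * m + 1) ^ (N + 2) := by
  set F : ℕ → ℕ := fun k ↦ (m + (N + 2) - k).choose (N + 2)
  have hpascal : ∑ τ : Equiv.Perm (Fin (N + 1)), F (descents τ + 1)
      = ∑ k ∈ range (N + 3), EulA (N + 1) (k - 1) * F k + m ^ (N + 1) := by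
    rw [← sum_perm_apply_descents_add_two, ← sum_choose_descents_perm, ← sum_add_distrib]
    refine sum_congr rfl fun τ _ ↦ ?_
    have hτ : descents τ ≤ N := descents_le τ
    have h₁ : m + (N + 2) - (descents τ + 1) = m + N - descents τ + 1 := by omega
    have h₂ : m + (N + 2) - (descents τ + 2) = m + N - descents τ := by omega
    simp only [F]
    rw [h₁, h₂, Nat.choose_succ_succ, add_comm]
  have hB := sum_signedPerm_choose_descents (N + 2) m
  simp only [← desB_eq_descents] at hB
  rw [← hB, sum_apply_desB F, hpascal]
  simp only [add_mul, sum_add_distrib, mul_assoc, ← mul_sum]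
  ring

end Counting

/-! ### Half-systems and odd maps -/

section OddInjections

variable {B : Type*} [InvolutiveNeg B]

/-- `R` contains exactly one of `b` and `-b` whenever these are distinct, and no `b = -b`. -/
def IsHalfSystem (R : Finset B) : Prop :=
  (∀ b ∈ R, -b ∉ R) ∧ ∀ b, -b ≠ b → b ∈ R ∨ -b ∈ R

lemma exists_isHalfSystem [Finite B] : ∃ R : Finset B, IsHalfSystem R := by
  have := Fintype.ofFinite B
  have e := Fintype.equivFin B
  refine ⟨({b | e (-b) < e b} : Finset B), fun b hb ↦ ?_, fun b hb ↦ ?_⟩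
  · rw [mem_filter_univ] at hb ⊢
    rw [neg_neg]
    exact hb.not_gt
  · rw [mem_filter_univ, mem_filter_univ, neg_neg]
    exact (e.injective.ne hb).lt_or_gt

lemma IsHalfSystem.two_mul_card [Fintype B] [DecidableEq B] {R : Finset B} (hR : IsHalfSystem R) :
    2 * #R = #{b : B | -b ≠ b} := by
  have hdisj : Disjoint R (R.map (Equiv.neg B).toEmbedding) := by
    refine disjoint_left.2 fun b hb hb' ↦ ?_
    obtain ⟨c, hc, rfl⟩ := mem_map.1 hb'
    exact hR.1 c hc hb
  have hunion : ({b | -b ≠ b} : Finset B) = R.disjUnion _ hdisj := by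
    ext b
    have hmap : b ∈ R.map (Equiv.neg B).toEmbedding ↔ -b ∈ R := by
      rw [mem_map_equiv]
      rfl
    rw [mem_filter_univ, mem_disjUnion, hmap]
    refine ⟨hR.2 b, ?_⟩
    rintro (hb | hb) heq
    · exact hR.1 b hb (heq.symm ▸ hb)
    · exact hR.1 _ hb (by rwa [neg_neg, ← heq])
  rw [hunion, card_disjUnion, card_map, two_mul]

lemma IsHalfSystem.odd_ext {R : Finset B} (hR : IsHalfSystem R) {y y' : B → ℤ}
    (hy : Function.Odd y) (hy' : Function.Odd y') (h : ∀ b ∈ R, y b = y' b) : y = y' := by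
  funext b
  have hb := hy b
  have hb' := hy' b
  by_cases hfix : -b = b
  · rw [hfix] at hb hb'
    omega
  · rcases hR.2 b hfix with hbR | hbR
    · exact h b hbR
    · have := h _ hbR
      omega

lemma isSignedInjection_restrict {R : Finset B} (hR : IsHalfSystem R) {y : B → ℤ}
    (hinj : Function.Injective y) (hodd : Function.Odd y) {m : ℕ} (hm : ∀ b, |y b| ≤ m) :
    IsSignedInjection m fun b : R ↦ y b := by
  refine ⟨fun b ↦ ⟨Int.one_le_abs fun h ↦ ?_, hm b⟩, fun b c h ↦ Subtype.ext ?_⟩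
  · have hfix : -(b : B) = b := hinj (by rw [hodd, show y b = 0 from h, neg_zero])
    exact hR.1 b b.2 (hfix.symm ▸ b.2)
  · rcases abs_eq_abs.1 h with h | h
    · exact hinj h
    · rw [← hodd] at h
      exact absurd (hinj h ▸ b.2) (hR.1 c c.2)

/-- The odd extension of a function on a half-system. -/
noncomputable def oddExtend (R : Finset B) (z : R → ℤ) (b : B) : ℤ :=
  if h : b ∈ R then z ⟨b, h⟩ else if h : -b ∈ R then -z ⟨-b, h⟩ else 0

lemma odd_oddExtend {R : Finset B} (hR : IsHalfSystem R) (z : R → ℤ) :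
    Function.Odd (oddExtend R z) := by
  intro b
  by_cases hb : b ∈ R
  · simp [oddExtend, hb, hR.1 b hb]
  · by_cases hb' : -b ∈ R <;> simp [oddExtend, hb, hb']

lemma oddExtend_injective {R : Finset B} (hR : IsHalfSystem R)
    (hzero : ∀ b c : B, -b = b → -c = c → b = c) {m : ℕ} {z : R → ℤ}
    (hz : IsSignedInjection m z) : Function.Injective (oddExtend R z) := by
  intro b c h
  have hne (p) : z p ≠ 0 := abs_pos.1 (hz.1 p).1
  have heq {p q} (h : z p = z q) : p = q := hz.2 (congrArg _ h)
  have hneg {p q} (h : z p = -z q) : False := by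
    have hpq : p = q := hz.2 (by simp only [h, abs_neg])
    subst hpq
    have := hne p
    omega
  have := hR.2 b
  have := hR.2 c
  have := neg_inj (a := b) (b := c)
  unfold oddExtend at h
  split_ifs at h <;> grind

lemma abs_oddExtend_le {R : Finset B} {m : ℕ} {z : R → ℤ} (hz : ∀ b, |z b| ≤ m) (b : B) :
    |oddExtend R z b| ≤ m := by
  unfold oddExtend
  split_ifs
  · exact hz _
  · rw [abs_neg]
    exact hz _
  · simp

theorem card_odd_injective [Fintype B] [DecidableEq B]
    (hzero : ∀ b c : B, -b = b → -c = c → b = c) (m : ℕ) {r : ℕ}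
    (hr : #{b : B | -b ≠ b} = 2 * r) :
    Nat.card {y : B → ℤ // Function.Injective y ∧ Function.Odd y ∧ ∀ b, |y b| ≤ m}
      = 2 ^ r * m.descFactorial r := by
  obtain ⟨R, hR⟩ := exists_isHalfSystem (B := B)
  have hcard : Fintype.card R = r := by
    have := hR.two_mul_card
    rw [Fintype.card_coe]
    omega
  rw [← hcard, ← card_isSignedInjection]
  refine Nat.card_congr <| Equiv.ofBijective
    (fun y ↦ ⟨_, isSignedInjection_restrict hR y.2.1 y.2.2.1 y.2.2.2⟩) ⟨fun y y' h ↦ ?_, fun z ↦ ?_⟩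
  · exact Subtype.ext <| hR.odd_ext y.2.2.1 y'.2.2.1
      fun b hb ↦ congrFun (congrArg Subtype.val h) ⟨b, hb⟩
  · refine ⟨⟨oddExtend R z, oddExtend_injective hR hzero z.2, odd_oddExtend hR z,
      abs_oddExtend_le fun b ↦ (z.2.1 b).2⟩, Subtype.ext (funext fun b ↦ ?_)⟩
    exact dif_pos b.2

end OddInjections

lemma card_filter_card_fiber_eq {ι α : Type*} [Fintype ι] [DecidableEq ι] [Fintype α]
    [DecidableEq α] (a : α) (k : ℕ) :
    #{f : ι → α | #{i | f i = a} = k}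
      = (Fintype.card ι).choose k * (Fintype.card α - 1) ^ (Fintype.card ι - k) := by
  have hfiber (S : Finset ι) : #{f : ι → α | ({i | f i = a} : Finset ι) = S}
      = (Fintype.card α - 1) ^ (Fintype.card ι - #S) := by
    have hpi : ({f | ({i | f i = a} : Finset ι) = S} : Finset (ι → α))
        = Fintype.piFinset fun i ↦ if i ∈ S then {a} else {a}ᶜ := by
      ext f
      simp only [mem_filter_univ, Fintype.mem_piFinset, Finset.ext_iff]
      refine forall_congr' fun i ↦ ?_
      by_cases hi : i ∈ S <;> simp [hi]
    rw [hpi, Fintype.card_piFinset, ← prod_mul_prod_compl S,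
      prod_eq_one fun i hi ↦ by rw [if_pos hi, card_singleton], one_mul,
      prod_congr rfl fun i hi ↦ by rw [if_neg (mem_compl.1 hi)], prod_const, card_compl,
      card_compl, card_singleton]
  have hmaps : ∀ f ∈ ({f | #{i | f i = a} = k} : Finset (ι → α)),
      ({i | f i = a} : Finset ι) ∈ powersetCard k univ := fun f hf ↦
    mem_powersetCard_univ.2 (mem_filter_univ f |>.1 hf)
  rw [card_eq_sum_card_fiberwise hmaps, ← card_univ, ← card_powersetCard, ← smul_eq_mul,
    ← sum_const]
  refine sum_congr rfl fun S hS ↦ ?_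
  rw [mem_powersetCard_univ] at hS
  rw [card_univ, ← hS, ← hfiber, filter_filter]
  congr 1
  refine filter_congr fun f _ ↦ ⟨And.right, fun h ↦ ⟨by rw [h, hS], h⟩⟩

section BoundedOddMaps

variable {B : Type*} [InvolutiveNeg B] {m : ℕ}

/-- The odd integer-valued maps with absolute value at most `m`. -/
abbrev BoundedOddMap (B : Type*) [InvolutiveNeg B] (m : ℕ) : Type _ :=
  {c : B → ℤ // Function.Odd c ∧ ∀ b, |c b| ≤ m}

noncomputable instance [Fintype B] : Fintype (BoundedOddMap B m) :=
  Fintype.subtype {c ∈ Fintype.piFinset fun _ ↦ Icc (-m : ℤ) m | Function.Odd c} fun c ↦ by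
    simp only [mem_filter, Fintype.mem_piFinset, mem_Icc, abs_le, and_comm]

/-- A bounded odd map amounts to its restriction to a half-system. -/
noncomputable def IsHalfSystem.restrictEquiv {R : Finset B} (hR : IsHalfSystem R) (m : ℕ) :
    BoundedOddMap B m ≃ (R → Icc (-m : ℤ) m) :=
  Equiv.ofBijective (fun c b ↦ ⟨c.1 b, mem_Icc.2 (abs_le.1 (c.2.2 b))⟩) <| by
    refine ⟨fun c c' h ↦ Subtype.ext <| hR.odd_ext c.2.1 c'.2.1 fun b hb ↦
      congrArg Subtype.val (congrFun h ⟨b, hb⟩), fun z ↦ ?_⟩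
    have hz (b) : |(z b : ℤ)| ≤ m := abs_le.2 (mem_Icc.1 (z b).2)
    exact ⟨⟨oddExtend R fun b ↦ z b, odd_oddExtend hR _, abs_oddExtend_le hz⟩,
      funext fun b ↦ Subtype.ext (dif_pos b.2)⟩

lemma card_boundedOddMap [Fintype B] {R : Finset B} (hR : IsHalfSystem R) (m : ℕ) :
    Fintype.card (BoundedOddMap B m) = (2 * m + 1) ^ #R := by
  rw [Fintype.card_congr (hR.restrictEquiv m), Fintype.card_fun, Fintype.card_coe,
    Fintype.card_coe, Int.card_Icc]
  congr 1
  omega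

lemma card_boundedOddMap_filter [Fintype B] {R : Finset B} (hR : IsHalfSystem R) (m k : ℕ) :
    #{c : BoundedOddMap B m | #{b ∈ R | c.1 b = 0} = k} = (#R).choose k * (2 * m) ^ (#R - k) := by
  have hcard : Fintype.card (Icc (-m : ℤ) m) - 1 = 2 * m := by
    rw [Fintype.card_coe, Int.card_Icc]
    omega
  let zero : Icc (-m : ℤ) m := ⟨0, by simp⟩
  rw [← hcard, ← Fintype.card_coe R, ← card_filter_card_fiber_eq zero]
  refine card_equiv (hR.restrictEquiv m) fun c ↦ ?_
  rw [mem_filter_univ, mem_filter_univ]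
  refine Eq.congr_left ?_
  rw [card_filter, card_filter, ← sum_coe_sort R fun b ↦ if c.1 b = 0 then 1 else 0]
  have hzero (b : R) : hR.restrictEquiv m c b = zero ↔ c.1 b = 0 := Subtype.ext_iff
  exact sum_congr rfl fun b _ ↦ if_congr (hzero b).symm rfl rfl

end BoundedOddMaps

/-! ### Partitions of type B as kernels of odd maps -/

/-- The ground set `{-n, …, -1, 1, …, n}` of the partitions of type B. -/
abbrev Ground (n : ℕ) : Type := {x : ℤ // x ≠ 0 ∧ |x| ≤ (n : ℤ)}

namespace Ground

variable {n : ℕ}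

noncomputable instance : Fintype (Ground n) :=
  Fintype.subtype ((Icc (-n : ℤ) n).erase 0) fun x ↦ by rw [mem_erase, mem_Icc, abs_le]

instance : InvolutiveNeg (Ground n) where
  neg x := ⟨-x, neg_ne_zero.2 x.2.1, by rw [abs_neg]; exact x.2.2⟩
  neg_neg x := Subtype.ext (neg_neg x.1)

@[simp] lemma coe_neg (x : Ground n) : ((-x : Ground n) : ℤ) = -x := rfl

lemma neg_ne_self (x : Ground n) : -x ≠ x := fun h ↦
  x.2.1 (self_eq_neg.1 (congrArg Subtype.val h).symm)

lemma card_eq (n : ℕ) : Fintype.card (Ground n) = 2 * n := by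
  rw [Fintype.subtype_card, card_erase_of_mem (by simp), Int.card_Icc]
  omega

/-- The positive elements `{1, …, n}` of the ground set. -/
noncomputable def positives (n : ℕ) : Finset (Ground n) := {x | 0 < (x : ℤ)}

lemma isHalfSystem_positives (n : ℕ) : IsHalfSystem (positives n) := by
  simp only [IsHalfSystem, positives, mem_filter_univ, coe_neg]
  refine ⟨fun x hx ↦ by omega, fun x _ ↦ ?_⟩
  have := x.2.1
  omega

lemma card_positives (n : ℕ) : #(positives n) = n := by
  have h := (isHalfSystem_positives n).two_mul_card
  rw [filter_true_of_mem fun x _ ↦ neg_ne_self x, card_univ, card_eq] at h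
  omega

end Ground

lemma mem_negSet {x : ℤ} {C : Finset ℤ} : x ∈ negSet C ↔ -x ∈ C := by
  rw [negSet, mem_image]
  exact ⟨fun ⟨y, hy, hyx⟩ ↦ by rwa [← hyx, neg_neg], fun h ↦ ⟨-x, h, neg_neg x⟩⟩

lemma negSet_negSet (C : Finset ℤ) : negSet (negSet C) = C := by
  ext x
  rw [mem_negSet, mem_negSet, neg_neg]

namespace BPartition

variable {n : ℕ} (P : BPartition n)

lemma blocks_injective : Function.Injective (blocks : BPartition n → Finset (Finset ℤ)) := by
  rintro ⟨⟩ ⟨⟩ h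
  congr

noncomputable instance : Fintype (BPartition n) := by
  have hsub (P : BPartition n) : P.blocks ∈ (Icc (-n : ℤ) n).powerset.powerset := by
    refine mem_powerset.2 fun C hC ↦ mem_powerset.2 fun x hx ↦ ?_
    exact mem_Icc.2 (abs_le.1 ((P.cover x).2 ⟨C, hC, hx⟩).2)
  exact Fintype.ofInjective (fun P ↦ (⟨P.blocks, hsub P⟩ : (Icc (-n : ℤ) n).powerset.powerset))
    fun P Q h ↦ blocks_injective (congrArg Subtype.val h)

instance : InvolutiveNeg P.blocks where
  neg C := ⟨negSet C, P.closed C C.2⟩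
  neg_neg C := Subtype.ext (negSet_negSet C)

lemma neg_eq_self_iff {C : P.blocks} : -C = C ↔ negSet C = C := Subtype.ext_iff

lemma eq_of_neg_eq_self (C C' : P.blocks) (h : -C = C) (h' : -C' = C') : C = C' :=
  Subtype.ext <| P.zeroUnique C C.2 C' C'.2 (P.neg_eq_self_iff.1 h) (P.neg_eq_self_iff.1 h')

lemma exists_mem_block (x : Ground n) : ∃ C : P.blocks, (x : ℤ) ∈ C.1 := by
  obtain ⟨C, hC, hx⟩ := (P.cover x).1 x.2
  exact ⟨⟨C, hC⟩, hx⟩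

/-- The block containing `x`. -/
noncomputable def blockOf (x : Ground n) : P.blocks := (P.exists_mem_block x).choose

variable {P}

lemma mem_block_iff {x : Ground n} {C : P.blocks} : (x : ℤ) ∈ C.1 ↔ P.blockOf x = C := by
  have hmem : (x : ℤ) ∈ (P.blockOf x).1 := (P.exists_mem_block x).choose_spec
  refine ⟨fun hx ↦ ?_, fun h ↦ h ▸ hmem⟩
  by_contra hne
  exact disjoint_left.1 (P.disj _ (P.blockOf x).2 C C.2 fun h ↦ hne (Subtype.ext h)) hmem hx

variable (P)

lemma blockOf_neg (x : Ground n) : P.blockOf (-x) = -P.blockOf x := by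
  refine mem_block_iff.1 (mem_negSet.2 ?_)
  rw [Ground.coe_neg, neg_neg]
  exact mem_block_iff.2 rfl

lemma blockOf_surjective : Function.Surjective P.blockOf := by
  intro C
  obtain ⟨x, hx⟩ := P.nonempty C C.2
  exact ⟨⟨x, (P.cover x).2 ⟨C, C.2, hx⟩⟩, mem_block_iff.1 hx⟩

variable {P}

lemma mem_blocks_iff {C : Finset ℤ} : C ∈ P.blocks ↔ ∃ x, (P.blockOf x).1 = C := by
  refine ⟨fun hC ↦ ?_, fun ⟨x, hx⟩ ↦ hx ▸ (P.blockOf x).2⟩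
  obtain ⟨x, hx⟩ := P.blockOf_surjective ⟨C, hC⟩
  exact ⟨x, congrArg Subtype.val hx⟩

lemma eq_of_blockOf_eq_iff {Q : BPartition n}
    (h : ∀ x y, P.blockOf x = P.blockOf y ↔ Q.blockOf x = Q.blockOf y) : P = Q := by
  have hblock (x : Ground n) : (P.blockOf x).1 = (Q.blockOf x).1 := by
    ext z
    by_cases hz : z ≠ 0 ∧ |z| ≤ (n : ℤ)
    · exact (mem_block_iff (x := ⟨z, hz⟩)).trans ((h _ _).trans mem_block_iff.symm)
    · have hnot (S : BPartition n) : z ∉ (S.blockOf x).1 := fun hmem ↦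
        hz ((S.cover z).2 ⟨_, (S.blockOf x).2, hmem⟩)
      exact iff_of_false (hnot P) (hnot Q)
  refine blocks_injective (Finset.ext fun C ↦ ?_)
  simp only [mem_blocks_iff, hblock]

variable (P)

/-- The number of pairs `{C, -C}` of nonzero blocks. -/
noncomputable def numPairs : ℕ := #{C : P.blocks | -C ≠ C} / 2

lemma card_neg_ne_self : #{C : P.blocks | -C ≠ C} = 2 * P.numPairs := by
  obtain ⟨R, hR⟩ := exists_isHalfSystem (B := P.blocks)
  have := hR.two_mul_card
  rw [numPairs]
  omega

lemma numPairs_le : P.numPairs ≤ n := by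
  have hblocks := Fintype.card_le_of_surjective _ P.blockOf_surjective
  have hfilter := card_le_univ ({C | -C ≠ C} : Finset P.blocks)
  rw [Ground.card_eq] at hblocks
  rw [card_neg_ne_self] at hfilter
  omega

lemma hasPairs_iff_numPairs_eq {r : ℕ} : hasPairs P r ↔ P.numPairs = r := by
  have hcard : #{C ∈ P.blocks | negSet C ≠ C} = #{C : P.blocks | -C ≠ C} := by
    rw [card_filter, card_filter, ← sum_coe_sort]
    exact sum_congr rfl fun C _ ↦ if_congr P.neg_eq_self_iff.symm.not rfl rfl
  rw [hasPairs, hcard, card_neg_ne_self]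
  omega

end BPartition

section Kernel

variable {n m : ℕ}

/-- The level set of `c` at `a`, as a set of integers. -/
noncomputable def fiber (c : Ground n → ℤ) (a : ℤ) : Finset ℤ :=
  ({x | c x = a} : Finset (Ground n)).map (Function.Embedding.subtype _)

lemma coe_mem_fiber {c : Ground n → ℤ} {a : ℤ} {x : Ground n} : (x : ℤ) ∈ fiber c a ↔ c x = a := by
  exact (mem_map' (Function.Embedding.subtype _)).trans (mem_filter_univ x)

lemma exists_of_mem_fiber {c : Ground n → ℤ} {a z : ℤ} (hz : z ∈ fiber c a) :
    ∃ x : Ground n, x = z ∧ c x = a := by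
  obtain ⟨x, hx, rfl⟩ := mem_map.1 hz
  exact ⟨x, rfl, mem_filter_univ x |>.1 hx⟩

lemma negSet_fiber {c : Ground n → ℤ} (hc : Function.Odd c) (a : ℤ) :
    negSet (fiber c a) = fiber c (-a) := by
  have hneg {a z : ℤ} (hz : z ∈ fiber c a) : -z ∈ fiber c (-a) := by
    obtain ⟨x, rfl, rfl⟩ := exists_of_mem_fiber hz
    exact coe_mem_fiber.2 (hc x)
  ext z
  rw [mem_negSet]
  exact ⟨fun hz ↦ by simpa only [neg_neg] using hneg hz,
    fun hz ↦ by simpa only [neg_neg] using hneg hz⟩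

lemma eq_of_fiber_eq {c : Ground n → ℤ} {x : Ground n} {a : ℤ} (h : fiber c (c x) = fiber c a) :
    c x = a :=
  coe_mem_fiber.1 (h ▸ coe_mem_fiber.2 rfl)

lemma apply_eq_zero_of_negSet_fiber_eq {c : Ground n → ℤ} (hc : Function.Odd c) {x : Ground n}
    (h : negSet (fiber c (c x)) = fiber c (c x)) : c x = 0 := by
  rw [negSet_fiber hc] at h
  exact self_eq_neg.1 (eq_of_fiber_eq h.symm)

/-- The partition of the ground set into the nonempty level sets of an odd map. Its zero-block is
the level set at `0`. -/
noncomputable def kernel (c : BoundedOddMap (Ground n) m) : BPartition n where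
  blocks := univ.image fun x ↦ fiber c.1 (c.1 x)
  cover z := by
    constructor
    · intro hz
      exact ⟨_, mem_image_of_mem _ (mem_univ ⟨z, hz⟩), coe_mem_fiber (x := ⟨z, hz⟩) |>.2 rfl⟩
    · rintro ⟨C, hC, hz⟩
      obtain ⟨x, -, rfl⟩ := mem_image.1 hC
      obtain ⟨y, rfl, -⟩ := exists_of_mem_fiber hz
      exact y.2
  nonempty := by
    refine forall_mem_image.2 fun x _ ↦ ⟨x, coe_mem_fiber.2 rfl⟩
  disj := by
    refine forall_mem_image.2 fun x _ ↦ forall_mem_image.2 fun y _ hne ↦ ?_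
    refine disjoint_left.2 fun z hx hy ↦ hne ?_
    obtain ⟨w, rfl, hwx⟩ := exists_of_mem_fiber hx
    rw [← hwx, coe_mem_fiber.1 hy]
  closed := by
    refine forall_mem_image.2 fun x _ ↦ ?_
    rw [negSet_fiber c.2.1, ← c.2.1]
    exact mem_image_of_mem _ (mem_univ _)
  zeroUnique := by
    refine forall_mem_image.2 fun x _ ↦ forall_mem_image.2 fun y _ hx hy ↦ ?_
    rw [apply_eq_zero_of_negSet_fiber_eq c.2.1 hx, apply_eq_zero_of_negSet_fiber_eq c.2.1 hy]

lemma mem_blocks_kernel {c : BoundedOddMap (Ground n) m} {C : Finset ℤ} :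
    C ∈ (kernel c).blocks ↔ ∃ x, fiber c.1 (c.1 x) = C := by
  simp only [kernel, mem_image, mem_univ, true_and]

lemma blockOf_kernel (c : BoundedOddMap (Ground n) m) (x : Ground n) :
    ((kernel c).blockOf x).1 = fiber c.1 (c.1 x) :=
  congrArg Subtype.val (BPartition.mem_block_iff (C := ⟨_, mem_blocks_kernel.2 ⟨x, rfl⟩⟩)
    |>.1 (coe_mem_fiber.2 rfl))

lemma blockOf_kernel_eq_iff {c : BoundedOddMap (Ground n) m} {x y : Ground n} :
    (kernel c).blockOf x = (kernel c).blockOf y ↔ c.1 x = c.1 y := by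
  rw [← BPartition.mem_block_iff, blockOf_kernel, coe_mem_fiber]

lemma kernel_eq_iff {c : BoundedOddMap (Ground n) m} {P : BPartition n} :
    kernel c = P ↔ ∀ x y, c.1 x = c.1 y ↔ P.blockOf x = P.blockOf y := by
  simp only [← blockOf_kernel_eq_iff]
  exact ⟨fun h _ _ ↦ h ▸ Iff.rfl, BPartition.eq_of_blockOf_eq_iff⟩

theorem card_kernel_eq (P : BPartition n) (m : ℕ) :
    #{c : BoundedOddMap (Ground n) m | kernel c = P}
      = 2 ^ P.numPairs * m.descFactorial P.numPairs := by
  rw [← card_odd_injective P.eq_of_neg_eq_self m P.card_neg_ne_self, ← Fintype.card_subtype,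
    ← Nat.card_eq_fintype_card]
  have hodd {y : P.blocks → ℤ} (hy : Function.Odd y) : Function.Odd (y ∘ P.blockOf) := fun x ↦ by
    rw [Function.comp_apply, P.blockOf_neg, hy, Function.comp_apply]
  symm
  refine Nat.card_congr <| Equiv.ofBijective (fun y ↦ ⟨⟨y.1 ∘ P.blockOf, hodd y.2.2.1,
    fun x ↦ y.2.2.2 _⟩, kernel_eq_iff.2 fun _ _ ↦ y.2.1.eq_iff⟩) ⟨fun y y' h ↦ ?_, ?_⟩
  · exact Subtype.ext <| P.blockOf_surjective.injective_comp_right <|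
      congrArg (fun c ↦ c.1.1) h
  · rintro ⟨⟨c, hcodd, hcm⟩, hc⟩
    rw [kernel_eq_iff] at hc
    obtain ⟨y, rfl⟩ := (Function.factorsThrough_iff c).1 fun _ _ ↦ (hc _ _).2
    refine ⟨⟨y, P.blockOf_surjective.forall₂.2 fun x x' ↦ (hc x x').1,
      P.blockOf_surjective.forall.2 fun x ↦ ?_, P.blockOf_surjective.forall.2 hcm⟩, rfl⟩
    rw [← P.blockOf_neg]
    exact hcodd x

lemma card_filter_pos_fiber_zero (c : Ground n → ℤ) :
    #{z ∈ fiber c 0 | 0 < z} = #{x ∈ Ground.positives n | c x = 0} := by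
  rw [fiber, filter_map, card_map, Ground.positives, filter_filter, filter_filter]
  exact congrArg card (filter_congr fun _ _ ↦ and_comm)

lemma isDPartition_kernel_iff {c : BoundedOddMap (Ground n) m} :
    IsDPartition (kernel c) ↔ #{x ∈ Ground.positives n | c.1 x = 0} ≠ 1 := by
  constructor
  · intro hD hone
    obtain ⟨x, hx⟩ := card_pos.1 (hone ▸ one_pos)
    have hblock : fiber c.1 0 ∈ (kernel c).blocks :=
      mem_blocks_kernel.2 ⟨x, by rw [(mem_filter.1 hx).2]⟩
    have htwo := hD _ hblock (by rw [negSet_fiber c.2.1, neg_zero])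
    rw [card_filter_pos_fiber_zero, hone] at htwo
    omega
  · intro hone C hC hneg
    obtain ⟨x, rfl⟩ := mem_blocks_kernel.1 hC
    have hx := apply_eq_zero_of_negSet_fiber_eq c.2.1 hneg
    have hpos : 0 < #{x ∈ Ground.positives n | c.1 x = 0} := by
      rcases (Ground.isHalfSystem_positives n).2 x x.neg_ne_self with hmem | hmem
      · exact card_pos.2 ⟨x, mem_filter.2 ⟨hmem, hx⟩⟩
      · exact card_pos.2 ⟨-x, mem_filter.2 ⟨hmem, by rw [c.2.1, hx, neg_zero]⟩⟩
    rw [hx, card_filter_pos_fiber_zero]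
    omega

end Kernel

lemma SD_eq_card (n r : ℕ) :
    SD n r = #{P ∈ ({P | IsDPartition P} : Finset (BPartition n)) | P.numPairs = r} := by
  rw [SD, Nat.card_eq_fintype_card, Fintype.card_subtype, filter_filter]
  exact congrArg card (filter_congr fun P _ ↦ and_congr_right' P.hasPairs_iff_numPairs_eq)

lemma card_isDPartition_kernel (n m : ℕ) :
    #{c : BoundedOddMap (Ground n) m | IsDPartition (kernel c)}
      = ∑ r ∈ range (n + 1), 2 ^ r * r.factorial * SD n r * m.choose r := by
  have hmaps : ∀ c ∈ ({c | IsDPartition (kernel c)} : Finset (BoundedOddMap (Ground n) m)),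
      kernel c ∈ ({P | IsDPartition P} : Finset (BPartition n)) := fun c hc ↦
    mem_filter_univ _ |>.2 (mem_filter_univ c |>.1 hc)
  have hrange : ∀ P ∈ ({P | IsDPartition P} : Finset (BPartition n)),
      P.numPairs ∈ range (n + 1) := fun P _ ↦ mem_range_succ_iff.2 P.numPairs_le
  rw [card_eq_sum_card_fiberwise hmaps, ← sum_fiberwise_of_maps_to hrange]
  refine sum_congr rfl fun r _ ↦ ?_
  have hfiber : ∀ P ∈ ({P ∈ {P | IsDPartition P} | P.numPairs = r} : Finset (BPartition n)),
      #{c ∈ ({c | IsDPartition (kernel c)} : Finset (BoundedOddMap (Ground n) m)) | kernel c = P}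
        = 2 ^ r * m.descFactorial r := by
    intro P hP
    simp only [mem_filter, mem_univ, true_and] at hP
    rw [← hP.2, ← card_kernel_eq, filter_filter]
    exact congrArg card (filter_congr fun c _ ↦ ⟨And.right, fun h ↦ ⟨h ▸ hP.1, h⟩⟩)
  rw [sum_congr rfl hfiber, sum_const, ← SD_eq_card, smul_eq_mul,
    Nat.descFactorial_eq_factorial_mul_choose]
  ring

theorem sum_SD_mul_choose (n m : ℕ) :
    ∑ r ∈ range (n + 1), 2 ^ r * r.factorial * SD n r * m.choose r + n * (2 * m) ^ (n - 1)
      = (2 * m + 1) ^ n := by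
  have hnotD : #{c : BoundedOddMap (Ground n) m | ¬IsDPartition (kernel c)}
      = n * (2 * m) ^ (n - 1) := by
    have h := card_boundedOddMap_filter (Ground.isHalfSystem_positives n) m 1
    rw [Ground.card_positives, Nat.choose_one_right] at h
    rw [← h]
    exact congrArg card (filter_congr fun c _ ↦ by rw [isDPartition_kernel_iff, not_not])
  rw [← card_isDPartition_kernel, ← hnotD, card_filter_add_card_filter_not, card_univ,
    card_boundedOddMap (Ground.isHalfSystem_positives n), Ground.card_positives]

/-- `A_D(n,k) = [Σ_{r=0}^{k} (−1)^{k−r} · 2^r · r! · S_D(n,r) · C(n−r, k−r)] − n · 2^{n−1} · A(n−1, k−1)`,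
where `A(n−1,k−1) := 0` when `k = 0`. -/
theorem eulerian_stirling_typeD (n k : ℕ) (hn : 2 ≤ n) (hk : k ≤ n) :
    (EulD n k : ℤ) =
      (∑ r ∈ Finset.range (k + 1),
        (-1 : ℤ) ^ (k - r) * 2 ^ r * Nat.factorial r * SD n r * Nat.choose (n - r) (k - r)) -
        n * 2 ^ (n - 1) * EulA (n - 1) (k - 1) := by
  obtain ⟨N, rfl⟩ := Nat.exists_eq_add_of_le' hn
  have hN : N + 2 - 1 = N + 1 := rfl
  have h := eq_sum_of_forall_sum_mul_choose_eq
    (a := fun k ↦ ((EulD (N + 2) k + (N + 2) * 2 ^ (N + 1) * EulA (N + 1) (k - 1) : ℕ) : ℤ))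
    (b := fun r ↦ ((2 ^ r * r.factorial * SD (N + 2) r : ℕ) : ℤ)) (fun m ↦ ?_) hk
  · rw [eq_sub_iff_add_eq, hN]
    push_cast at h ⊢
    rw [h]
    exact sum_congr rfl fun r _ ↦ by ring
  · have hcount := (sum_EulD_add_EulA_mul_choose N m).trans (sum_SD_mul_choose (N + 2) m).symm
    exact_mod_cast Nat.add_right_cancel hcount
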